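/- The automorphism group of the graph Ξ_I has cardinality exactly 12. -/

import Mathlib

/-- The ten faces of the hemi-icosahedron on vertex set `Fin 6`. -/
def faces : Finset (Finset (Fin 6)) :=
  {{0,1,2}, {0,2,3}, {0,3,4}, {0,4,5}, {0,5,1}, {1,2,4}, {2,3,5}, {1,3,4}, {2,4,5}, {1,3,5}}

/-- The 16-element vertex set: `Fin 6` together with the ten faces. -/
abbrev V16 := Fin 6 ⊕ {f : Finset (Fin 6) // f ∈ faces}

/-- Vertex-face incidence: `v : Fin 6` is incident to a face `f` iff `v ∈ f`. -/
def piRel : V16 → V16 → Prop := fun a b =>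
  match a, b with
  | Sum.inl v, Sum.inr f => v ∈ f.1
  | _, _ => False

instance : DecidableRel piRel := fun a b =>
  match a, b with
  | Sum.inl v, Sum.inr f => inferInstanceAs (Decidable (v ∈ f.1))
  | Sum.inl _, Sum.inl _ => Decidable.isFalse id
  | Sum.inr _, Sum.inl _ => Decidable.isFalse id
  | Sum.inr _, Sum.inr _ => Decidable.isFalse id

/-- `Π_I`, the projective vertex-face graph of the icosahedron (vertex-face graph of
the hemi-icosahedron): `v : Fin 6` is adjacent to `f ∈ faces` iff `v ∈ f`. -/
def piI : SimpleGraph V16 := SimpleGraph.fromRel piRel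

instance : DecidableRel piI.Adj := fun a b =>
  decidable_of_iff _ (SimpleGraph.fromRel_adj piRel a b).symm

/-- The relation of `Π_I` together with the three extra edges `{1,3}`, `{0,2}`, `{4,5}`. -/
def xiRel : V16 → V16 → Prop := fun a b =>
  match a, b with
  | Sum.inl v, Sum.inr f => v ∈ f.1
  | Sum.inl v, Sum.inl w => (v = 1 ∧ w = 3) ∨ (v = 0 ∧ w = 2) ∨ (v = 4 ∧ w = 5)
  | _, _ => False

instance : DecidableRel xiRel := fun a b =>
  match a, b with
  | Sum.inl v, Sum.inr f => inferInstanceAs (Decidable (v ∈ f.1))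
  | Sum.inl v, Sum.inl w =>
      inferInstanceAs (Decidable ((v = 1 ∧ w = 3) ∨ (v = 0 ∧ w = 2) ∨ (v = 4 ∧ w = 5)))
  | Sum.inr _, Sum.inl _ => Decidable.isFalse id
  | Sum.inr _, Sum.inr _ => Decidable.isFalse id

/-- `Ξ_I`: the graph `Π_I` with the three extra edges `{1,3}`, `{0,2}`, `{4,5}` added. -/
def xiI : SimpleGraph V16 := SimpleGraph.fromRel xiRel

instance : DecidableRel xiI.Adj := fun a b =>
  decidable_of_iff _ (SimpleGraph.fromRel_adj xiRel a b).symm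

/-!
In `Ξ_I` the vertices `v : Fin 6` have degree `6` and the faces have degree `3`, so an automorphism
preserves the two sides. A face is determined by its vertices, so the automorphism is determined by
its action on `Fin 6`, which can be any automorphism of the graph of the three extra edges that
permutes the faces. The group of such permutations is transitive on `Fin 6`. One that fixes `0`
also fixes its partner `2`, hence permutes the two faces `{0, 1, 2}` and `{0, 2, 3}` through the
edge `{0, 2}`, and it is trivial as soon as it fixes `1` as well. So the stabilizer of `0` has two
elements, and the orbit-stabilizer theorem gives `2 * 6`.
-/

open SimpleGraph MulAction Finset
open scoped Pointwise

theorem mapsTo_range_inl_of_degree_ne {α β : Type*} {G : SimpleGraph (α ⊕ β)} [G.LocallyFinite]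
    (hdeg : ∀ a b, G.degree (.inl a) ≠ G.degree (.inr b)) (φ : G ≃g G) :
    Set.MapsTo φ (Set.range Sum.inl) (Set.range Sum.inl) := by
  rintro _ ⟨a, rfl⟩
  rcases h : φ (.inl a) with a' | b
  · exact ⟨a', rfl⟩
  · exact absurd (φ.degree_eq (.inl a)) (h ▸ (hdeg a b).symm)

/-- The graph on points and blocks in which points are joined as in `H` and a point is joined to
every block of `B` containing it. For `H = ⊥` it is the Levi graph of the block system `B`. -/
def blockGraph {V : Type*} (H : SimpleGraph V) (B : Finset (Finset V)) : SimpleGraph (V ⊕ B) where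
  Adj
    | .inl v, .inl w => H.Adj v w
    | .inl v, .inr f => v ∈ f.1
    | .inr f, .inl v => v ∈ f.1
    | .inr _, .inr _ => False
  symm := ⟨by
    rintro (v | f) (w | g) h
    exacts [h.symm, h, h, h]⟩
  loopless := ⟨by
    rintro (v | f) h
    exacts [H.irrefl h, h]⟩

namespace blockGraph

variable {V : Type*} {H : SimpleGraph V} {B : Finset (Finset V)} {v w : V} {f g : B}

@[simp] theorem adj_inl_inl : (blockGraph H B).Adj (.inl v) (.inl w) ↔ H.Adj v w := .rfl

@[simp] theorem adj_inl_inr : (blockGraph H B).Adj (.inl v) (.inr f) ↔ v ∈ f.1 := .rfl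

@[simp] theorem adj_inr_inl : (blockGraph H B).Adj (.inr f) (.inl v) ↔ v ∈ f.1 := .rfl

@[simp] theorem not_adj_inr_inr : ¬(blockGraph H B).Adj (.inr f) (.inr g) := id

theorem degree_inl [DecidableEq V] [Fintype (H.neighborSet v)]
    [Fintype ((blockGraph H B).neighborSet (.inl v))] :
    (blockGraph H B).degree (.inl v) = H.degree v + #{f ∈ B | v ∈ f} := by
  have h : (blockGraph H B).neighborFinset (.inl v)
      = (H.neighborFinset v).disjSum ({f ∈ B | v ∈ f}.subtype (· ∈ B)) := by
    ext (w | f) <;> simp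
  rw [← card_neighborFinset_eq_degree, h, card_disjSum, card_neighborFinset_eq_degree,
    card_subtype, filter_true_of_mem fun f hf => (mem_filter.mp hf).1]

theorem degree_inr [Fintype ((blockGraph H B).neighborSet (.inr f))] :
    (blockGraph H B).degree (.inr f) = #f.1 := by
  have h : (blockGraph H B).neighborFinset (.inr f) = f.1.map .inl := by
    ext (w | g) <;> simp
  rw [← card_neighborFinset_eq_degree, h, card_map]

variable [DecidableEq V]

/-- The automorphism of `blockGraph H B` induced by an automorphism of `H` that permutes the
blocks. -/
def extend : stabilizer (H ≃g H) B →* (blockGraph H B ≃g blockGraph H B) where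
  toFun σ :=
    { toEquiv := .sumCongr σ.1.toEquiv ((toPerm σ.1).subtypePerm (mem_stabilizer_finset.mp σ.2))
      map_rel_iff' := by
        rintro (v | f) (w | g)
        · exact σ.1.map_adj_iff
        · exact smul_mem_smul_finset_iff (s := g.1) σ.1
        · exact smul_mem_smul_finset_iff (s := f.1) σ.1
        · exact .rfl }
  map_one' := by
    ext (v | f)
    · rfl
    · exact congrArg Sum.inr (Subtype.ext (one_smul (H ≃g H) f.1))
  map_mul' σ τ := by
    ext (v | f)
    · rfl
    · exact congrArg Sum.inr (Subtype.ext (mul_smul σ.1 τ.1 f.1))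

theorem extend_inl (σ : stabilizer (H ≃g H) B) (v : V) : extend σ (.inl v) = .inl (σ • v) := rfl

theorem extend_inr (σ : stabilizer (H ≃g H) B) (f : B) :
    extend σ (.inr f) = .inr ⟨σ • f.1, (mem_stabilizer_finset.mp σ.2 f.1).mpr f.2⟩ := rfl

theorem extend_injective : Function.Injective (extend (H := H) (B := B)) := fun _ _ h =>
  Subtype.ext <| RelIso.ext fun v => Sum.inl_injective <| DFunLike.congr_fun h (.inl v)

theorem exists_extend_eq [Finite V] {φ : blockGraph H B ≃g blockGraph H B}
    (hφ : Set.MapsTo φ (Set.range Sum.inl) (Set.range Sum.inl)) : ∃ σ, extend σ = φ := by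
  obtain ⟨⟨π, ψ⟩, hπψ⟩ := Equiv.Perm.mem_sumCongrHom_range_of_perm_mapsTo_inl (σ := φ.toEquiv) hφ
  have φ_inl (v : V) : φ (.inl v) = .inl (π v) := (Equiv.congr_fun hπψ (.inl v)).symm
  have φ_inr (f : B) : φ (.inr f) = .inr (ψ f) := (Equiv.congr_fun hπψ (.inr f)).symm
  let σ : H ≃g H := ⟨π, fun {v w} => by
    simpa only [φ_inl, adj_inl_inl] using φ.map_adj_iff (v := .inl v) (w := .inl w)⟩
  have ψ_eq_smul (f : B) : (ψ f).1 = σ • f.1 := by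
    ext v
    obtain ⟨w, rfl⟩ := σ.surjective v
    have mem_iff : π w ∈ (ψ f).1 ↔ w ∈ f.1 := by
      simpa only [φ_inl, φ_inr, adj_inl_inr] using φ.map_adj_iff (v := .inl w) (w := .inr f)
    exact mem_iff.trans (smul_mem_smul_finset_iff σ).symm
  have hσ : σ ∈ stabilizer (H ≃g H) B :=
    mem_stabilizer_finset'.mpr fun f hf => ψ_eq_smul ⟨f, hf⟩ ▸ (ψ ⟨f, hf⟩).2
  refine ⟨⟨σ, hσ⟩, RelIso.ext ?_⟩
  rintro (v | f)
  · rw [φ_inl, extend_inl]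
    rfl
  · rw [φ_inr, extend_inr]
    exact congrArg Sum.inr (Subtype.ext (ψ_eq_smul f).symm)

theorem extend_bijective [Fintype V] [DecidableRel H.Adj]
    (hdeg : ∀ v, ∀ f ∈ B, H.degree v + #{g ∈ B | v ∈ g} ≠ #f) :
    Function.Bijective (extend (H := H) (B := B)) := by
  classical
  let _ : (blockGraph H B).LocallyFinite := fun _ => Fintype.ofFinite _
  refine ⟨extend_injective, fun φ => exists_extend_eq (mapsTo_range_inl_of_degree_ne ?_ φ)⟩
  intro v f
  rw [degree_inl, degree_inr]
  exact hdeg v f f.2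

end blockGraph

/-- The three edges by which `Ξ_I` extends `Π_I`, as a graph on `Fin 6`; they form a perfect
matching. -/
def extraEdges : SimpleGraph (Fin 6) := fromEdgeSet {s(1, 3), s(0, 2), s(4, 5)}

instance : DecidableRel extraEdges.Adj := inferInstanceAs (DecidableRel (fromEdgeSet _).Adj)

theorem xiI_eq_blockGraph : xiI = blockGraph extraEdges faces := by
  ext (v | f) (w | g)
  · rw [blockGraph.adj_inl_inl]
    revert v w
    decide
  all_goals simp [xiI, xiRel]

theorem extraEdges_degree : ∀ v, extraEdges.degree v = 1 := by decide

theorem eq_of_extraEdges_adj : ∀ {u v w}, extraEdges.Adj u v → extraEdges.Adj u w → v = w := by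
  decide

theorem card_faces_containing : ∀ v, #{f ∈ faces | v ∈ f} = 5 := by decide

theorem card_of_mem_faces : ∀ f ∈ faces, #f = 3 := by decide

/-- The group of automorphisms of the matching `extraEdges` that permute the faces of the
hemi-icosahedron; extending them to faces will give all automorphisms of `Ξ_I`. -/
abbrev MatchingSymm : Subgroup (extraEdges ≃g extraEdges) :=
  stabilizer (extraEdges ≃g extraEdges) faces

namespace MatchingSymm

/-- The rotation of order three around the face `{2, 3, 5}`. -/
def rotation : MatchingSymm :=
  ⟨⟨c[0, 1, 4] * c[2, 3, 5], by decide⟩, mem_stabilizer_iff.mpr (by decide)⟩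

/-- The half-turn that fixes the vertices `0` and `2`. -/
def halfTurn02 : MatchingSymm :=
  ⟨⟨c[1, 3] * c[4, 5], by decide⟩, mem_stabilizer_iff.mpr (by decide)⟩

/-- The half-turn that fixes the vertices `4` and `5`. -/
def halfTurn45 : MatchingSymm :=
  ⟨⟨c[0, 2] * c[1, 3], by decide⟩, mem_stabilizer_iff.mpr (by decide)⟩

instance : IsPretransitive MatchingSymm (Fin 6) := by
  have exists_smul_zero_eq :
      ∀ v : Fin 6, ∃ i < 3, ∃ j < 2, (rotation ^ i * halfTurn45 ^ j) • (0 : Fin 6) = v := by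
    decide
  refine (isPretransitive_iff_base 0).mpr fun v => ?_
  obtain ⟨i, -, j, -, h⟩ := exists_smul_zero_eq v
  exact ⟨_, h⟩

variable {σ : MatchingSymm} {v w : Fin 6}

theorem smul_eq_self_of_adj (hvw : extraEdges.Adj v w) (hv : σ • v = v) : σ • w = w := by
  have h : extraEdges.Adj (σ • v) (σ • w) := σ.1.map_adj_iff.mpr hvw
  exact eq_of_extraEdges_adj (hv ▸ h) hvw

theorem smul_mem_faces (σ : MatchingSymm) {f : Finset (Fin 6)} (hf : f ∈ faces) : σ • f ∈ faces :=
  mem_stabilizer_finset'.mp σ.2 hf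

theorem smul_one_eq_one_or_three (h0 : σ • (0 : Fin 6) = 0) :
    σ • (1 : Fin 6) = 1 ∨ σ • (1 : Fin 6) = 3 := by
  have third_vertex : ∀ x : Fin 6, {0, x, 2} ∈ faces → x = 1 ∨ x = 3 := by decide
  have h2 : σ • (2 : Fin 6) = 2 := smul_eq_self_of_adj (by decide) h0
  have hface : σ • ({0, 1, 2} : Finset (Fin 6)) ∈ faces := smul_mem_faces σ (by decide)
  simp only [smul_finset_insert, smul_finset_singleton, h0, h2] at hface
  exact third_vertex _ hface

theorem eq_one_of_smul_zero_eq_of_smul_one_eq (h0 : σ • (0 : Fin 6) = 0)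
    (h1 : σ • (1 : Fin 6) = 1) : σ = 1 := by
  have third_vertex : ∀ x : Fin 6, {0, 3, x} ∈ faces → x = 2 ∨ x = 4 := by decide
  have h2 : σ • (2 : Fin 6) = 2 := smul_eq_self_of_adj (by decide) h0
  have h3 : σ • (3 : Fin 6) = 3 := smul_eq_self_of_adj (by decide) h1
  have h4 : σ • (4 : Fin 6) = 4 := by
    have hface : σ • ({0, 3, 4} : Finset (Fin 6)) ∈ faces := smul_mem_faces σ (by decide)
    simp only [smul_finset_insert, smul_finset_singleton, h0, h3] at hface
    refine (third_vertex _ hface).resolve_left fun h => ?_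
    exact absurd (MulAction.injective σ (h.trans h2.symm)) (by decide)
  have h5 : σ • (5 : Fin 6) = 5 := smul_eq_self_of_adj (by decide) h4
  ext v : 2
  fin_cases v
  exacts [h0, h1, h2, h3, h4, h5]

theorem halfTurn02_sq : halfTurn02 ^ 2 = 1 := Subtype.ext (RelIso.ext (by decide))

theorem stabilizer_zero_eq_zpowers :
    stabilizer MatchingSymm (0 : Fin 6) = Subgroup.zpowers halfTurn02 := by
  refine le_antisymm (fun σ h0 => ?_) (Subgroup.zpowers_le.mpr (mem_stabilizer_iff.mpr (by decide)))
  rcases smul_one_eq_one_or_three h0 with h1 | h1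
  · exact eq_one_of_smul_zero_eq_of_smul_one_eq h0 h1 ▸ one_mem _
  · have h : halfTurn02 * σ = 1 := by
      apply eq_one_of_smul_zero_eq_of_smul_one_eq
      · rw [mul_smul, mem_stabilizer_iff.mp h0]
        decide
      · rw [mul_smul, h1]
        decide
    exact eq_inv_of_mul_eq_one_right h ▸ inv_mem (Subgroup.mem_zpowers halfTurn02)

theorem card_stabilizer_zero : Nat.card (stabilizer MatchingSymm (0 : Fin 6)) = 2 := by
  have halfTurn02_ne_one : halfTurn02 ≠ 1 := fun h =>
    absurd (congrArg (· • (1 : Fin 6)) h) (by decide)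
  rw [stabilizer_zero_eq_zpowers, Nat.card_zpowers,
    orderOf_eq_prime halfTurn02_sq halfTurn02_ne_one]

theorem card_eq_twelve : Nat.card MatchingSymm = 12 := by
  rw [← (stabilizer MatchingSymm (0 : Fin 6)).card_mul_index, card_stabilizer_zero,
    index_stabilizer_of_transitive, Nat.card_fin]

end MatchingSymm

/-- The automorphism group of `Ξ_I` has exactly 12 elements. -/
theorem stmt_12 : Nat.card (xiI ≃g xiI) = 12 := by
  have degree_ne (v) (f) (hf : f ∈ faces) : extraEdges.degree v + #{g ∈ faces | v ∈ g} ≠ #f := by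
    rw [extraEdges_degree, card_faces_containing, card_of_mem_faces f hf]
    decide
  rw [xiI_eq_blockGraph, ← Nat.card_eq_of_bijective _ (blockGraph.extend_bijective degree_ne)]
  exact MatchingSymm.card_eq_twelve
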